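/- For every positive integer n, the rank over ℚ of the forest compatibility matrix F_n is at most the n-th Catalan number C_n. -/

import Mathlib

noncomputable section

/-- The number of blocks of a partition of `β`, where the partition is
represented as the setoid (equivalence relation) whose classes are the blocks. -/
def nBlocks {β : Type*} (s : Setoid β) : ℕ := Nat.card (Quotient s)

/-- Two partitions `π` and `ρ` of a finite set are compatible if
`|π| + |ρ| = n + |π ⊔ ρ|`, where `n` is the size of the ground set and `⊔` is
the join in the lattice of partitions (gluing representative forests yields a forest). -/
def Compatible {β : Type*} (s t : Setoid β) : Prop :=
  nBlocks s + nBlocks t = Nat.card β + nBlocks (s ⊔ t)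

open scoped Classical in
/-- The forest compatibility matrix `F_β`, with rows and columns indexed by the
partitions of `β`: the entry at `(π, ρ)` is `1` if `π` and `ρ` are compatible and
`0` otherwise. -/
def FMat (β : Type*) : Matrix (Setoid β) (Setoid β) ℚ := fun s t =>
  if Compatible s t then 1 else 0

instance instFiniteSetoid {α : Type*} [Finite α] : Finite (Setoid α) :=
  Finite.of_injective (fun s : Setoid α => s.r) fun s t h => by cases s; cases t; congr

noncomputable instance {α : Type*} [Finite α] : Fintype (Setoid α) := Fintype.ofFinite _

/-!
The rows at the noncrossing partitions span the row space, and the noncrossing partitions of `n`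
points satisfy the Catalan recursion: cut at the largest element of the block of the least point.

For the spanning statement, every partition is a relabelling of one whose blocks are intervals,
which is noncrossing, so it suffices that the span of the noncrossing rows is stable under adjacent
transpositions. Transposing adjacent points `a` and `b` of a noncrossing partition either yields a
noncrossing partition or detaches `a` and `b` from two distinct blocks `c` and `d` and exchanges
them, i.e. replaces `ac|bd` by `ad|bc`. The forest matrix on the four points `a, b, c, d` has a one
dimensional kernel, spanned by
`(ad|bc) + (ac|bd) + (ab|cd) + (abcd) - (abc|d) - (abd|c) - (acd|b) - (bcd|a)`,
and the same relation holds among four blocks of any partition. It expresses the row at `ad|bc`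
through rows at partitions which, `a` and `b` being adjacent, are noncrossing.
-/

section MergeBlocks

variable {α β : Type*} (s t : Setoid α) (x y u v : α)

/-- The partition obtained from `s` by uniting the block of `x` with the block of `y`: the effect
of adding the edge `xy` to a forest representing `s`. -/
def mergeBlocks : Setoid α where
  r u v := s u v ∨ (s u x ∧ s y v) ∨ (s u y ∧ s x v)
  iseqv := by
    have symm {p q : α} : s p q → s q p := s.symm
    have trans {p q r : α} : s p q → s q r → s p r := s.trans
    exact ⟨fun p => .inl (s.refl p), by grind, by grind⟩

theorem mergeBlocks_rel :
    mergeBlocks s x y u v ↔ s u v ∨ (s u x ∧ s y v) ∨ (s u y ∧ s x v) :=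
  Iff.rfl

theorem mergeBlocks_le_iff : mergeBlocks s x y ≤ t ↔ s ≤ t ∧ t x y := by
  refine ⟨fun h => ⟨fun _ _ huv => h (.inl huv), h (.inr (.inl ⟨s.refl x, s.refl y⟩))⟩, ?_⟩
  rintro ⟨h, hxy⟩ u v (huv | ⟨hux, hyv⟩ | ⟨huy, hxv⟩)
  · exact h huv
  · exact t.trans (h hux) (t.trans hxy (h hyv))
  · exact t.trans (h huy) (t.trans (t.symm hxy) (h hxv))

theorem le_mergeBlocks : s ≤ mergeBlocks s x y :=
  ((mergeBlocks_le_iff s _ x y).1 le_rfl).1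

theorem mergeBlocks_rel_self : mergeBlocks s x y x y :=
  ((mergeBlocks_le_iff s _ x y).1 le_rfl).2

theorem mergeBlocks_sup : mergeBlocks s x y ⊔ t = mergeBlocks (s ⊔ t) x y :=
  eq_of_forall_ge_iff fun r => by simp only [sup_le_iff, mergeBlocks_le_iff]; tauto

theorem mergeBlocks_sup_rel :
    (mergeBlocks s x y ⊔ t) u v ↔
      (s ⊔ t) u v ∨ ((s ⊔ t) u x ∧ (s ⊔ t) y v) ∨ ((s ⊔ t) u y ∧ (s ⊔ t) x v) := by
  rw [mergeBlocks_sup, mergeBlocks_rel]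

variable {s x y} in
theorem mergeBlocks_of_rel (h : s x y) : mergeBlocks s x y = s :=
  eq_of_forall_ge_iff fun r => by
    rw [mergeBlocks_le_iff]
    exact ⟨And.left, fun hr => ⟨hr, hr h⟩⟩

theorem mergeBlocks_comm : mergeBlocks s x y = mergeBlocks s y x :=
  eq_of_forall_ge_iff fun r => by
    rw [mergeBlocks_le_iff, mergeBlocks_le_iff, r.comm' (x := x)]

theorem mergeBlocks_right_comm :
    mergeBlocks (mergeBlocks s x y) u v = mergeBlocks (mergeBlocks s u v) x y :=
  eq_of_forall_ge_iff fun r => by simp only [mergeBlocks_le_iff, and_right_comm]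

variable {s x y u v} in
theorem mergeBlocks_congr (hxu : s x u) (hyv : s y v) : mergeBlocks s x y = mergeBlocks s u v :=
  eq_of_forall_ge_iff fun r => by
    simp only [mergeBlocks_le_iff]
    refine and_congr_right fun hr => ?_
    exact ⟨fun h => r.trans (r.symm (hr hxu)) (r.trans h (hr hyv)),
      fun h => r.trans (hr hxu) (r.trans h (r.symm (hr hyv)))⟩

theorem comap_mergeBlocks (e : β ≃ α) :
    (mergeBlocks s x y).comap e = mergeBlocks (s.comap e) (e.symm x) (e.symm y) := by
  ext u v
  simp only [Setoid.comap_rel, mergeBlocks_rel, Equiv.apply_symm_apply]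

@[elab_as_elim]
theorem mergeBlocks_induction [Finite α] {P : Setoid α → Prop} (bot : P ⊥)
    (merge : ∀ s x y, ¬ s x y → P s → P (mergeBlocks s x y)) : P s := by
  obtain ⟨r, ⟨hrs, hr⟩, hmax⟩ :=
    (Set.toFinite {r | r ≤ s ∧ P r}).exists_maximal ⟨⊥, bot_le, bot⟩
  suffices s ≤ r from le_antisymm hrs this ▸ hr
  intro x y hxy
  by_contra hrxy
  have hle : mergeBlocks r x y ≤ s := (mergeBlocks_le_iff r s x y).2 ⟨hrs, hxy⟩
  exact hrxy (hmax ⟨hle, merge r x y hrxy hr⟩ (le_mergeBlocks r x y) (mergeBlocks_rel_self r x y))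

end MergeBlocks

section Compatibility

variable {α β : Type*}

theorem nBlocks_bot : nBlocks (⊥ : Setoid α) = Nat.card α :=
  Nat.card_congr (Equiv.ofBijective (Quotient.mk ⊥)
    ⟨fun _ _ h => Quotient.exact h, Quotient.mk_surjective⟩).symm

theorem nBlocks_comap (e : α ≃ β) (s : Setoid β) : nBlocks (s.comap e) = nBlocks s :=
  Nat.card_congr (Quotient.congr e fun _ _ => Iff.rfl)

variable [Finite α] {s : Setoid α} (r : Setoid α) {x y : α}

theorem nBlocks_mergeBlocks_add_one (h : ¬ s x y) :
    nBlocks (mergeBlocks s x y) + 1 = nBlocks s := by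
  classical
  let redirect : α → Quotient s := fun z => if s z y then ⟦x⟧ else ⟦z⟧
  have hker : mergeBlocks s x y = Setoid.ker redirect := by
    ext u v
    have symm {p q : α} : s p q → s q p := s.symm
    have mk_eq (p q : α) : (⟦p⟧ : Quotient s) = ⟦q⟧ ↔ s p q := Quotient.eq
    simp only [mergeBlocks_rel, Setoid.ker_def, redirect]
    grind
  have hrange : Set.range redirect = {⟦y⟧}ᶜ := by
    ext q
    induction q using Quotient.inductionOn with | _ q =>
    simp only [Set.mem_range, Set.mem_compl_iff, Set.mem_singleton_iff, redirect]
    refine ⟨?_, fun hq => ⟨q, if_neg fun hqy => hq (Quotient.sound hqy)⟩⟩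
    rintro ⟨z, hz⟩ hq
    rw [hq] at hz
    split_ifs at hz with hzy
    · exact h (Quotient.exact hz)
    · exact hzy (Quotient.exact hz)
  rw [nBlocks, nBlocks, hker, Nat.card_congr (Setoid.quotientKerEquivRange _), hrange,
    Nat.card_coe_set_eq, ← Set.ncard_add_ncard_compl {⟦y⟧}, Set.ncard_singleton, add_comm]

theorem nBlocks_le_nBlocks_mergeBlocks_add_one (s : Setoid α) (x y : α) :
    nBlocks s ≤ nBlocks (mergeBlocks s x y) + 1 := by
  by_cases h : s x y
  · rw [mergeBlocks_of_rel h]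
    exact Nat.le_succ _
  · exact (nBlocks_mergeBlocks_add_one h).ge

theorem nBlocks_add_nBlocks_le (s : Setoid α) :
    nBlocks s + nBlocks r ≤ Nat.card α + nBlocks (s ⊔ r) := by
  induction s using mergeBlocks_induction with
  | bot => rw [nBlocks_bot, bot_sup_eq]
  | merge s x y hxy ih =>
    rw [mergeBlocks_sup]
    have := nBlocks_mergeBlocks_add_one hxy
    have := nBlocks_le_nBlocks_mergeBlocks_add_one (s ⊔ r) x y
    omega

theorem compatible_mergeBlocks_iff (h : ¬ s x y) :
    Compatible (mergeBlocks s x y) r ↔ Compatible s r ∧ ¬ (s ⊔ r) x y := by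
  have hs := nBlocks_mergeBlocks_add_one h
  have hle := nBlocks_add_nBlocks_le r s
  rw [Compatible, Compatible, mergeBlocks_sup]
  by_cases hsr : (s ⊔ r) x y
  · simp only [mergeBlocks_of_rel hsr, hsr, not_true, and_false, iff_false]
    omega
  · have := nBlocks_mergeBlocks_add_one hsr
    simp only [hsr, not_false_eq_true, and_true]
    omega

end Compatibility

section ForestRow

variable {α : Type*}

/-- The row of the forest matrix at the partition `s`, as a vector in `Setoid α → ℚ`. -/
def forestRow (s : Setoid α) : Setoid α → ℚ :=
  (FMat α).row s

open scoped Classical in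
theorem forestRow_apply (s r : Setoid α) : forestRow s r = if Compatible s r then 1 else 0 :=
  rfl

variable [Finite α] {s : Setoid α}

open scoped Classical in
theorem forestRow_mergeBlocks_apply (r : Setoid α) {x y : α} (h : ¬ s x y) :
    forestRow (mergeBlocks s x y) r = if (s ⊔ r) x y then 0 else forestRow s r := by
  simp only [forestRow_apply, compatible_mergeBlocks_iff r h]
  split_ifs <;> tauto

-- On four blocks the forest matrix has corank one, and this is the relation among its rows.
theorem forestRow_pairings_add_whole_eq_triples {a b c d : α} (hab : ¬ s a b) (hac : ¬ s a c)
    (had : ¬ s a d) (hbc : ¬ s b c) (hbd : ¬ s b d) (hcd : ¬ s c d) :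
    forestRow (mergeBlocks (mergeBlocks s b c) a d)
        + forestRow (mergeBlocks (mergeBlocks s a c) b d)
        + forestRow (mergeBlocks (mergeBlocks s a b) c d)
        + forestRow (mergeBlocks (mergeBlocks (mergeBlocks s a c) b d) a b) =
      forestRow (mergeBlocks (mergeBlocks s a c) a b)
        + forestRow (mergeBlocks (mergeBlocks s b d) a b)
        + forestRow (mergeBlocks (mergeBlocks s a c) c d)
        + forestRow (mergeBlocks (mergeBlocks s b d) c d) := by
  classical
  funext r
  have symm {p q : α} : ¬ s p q → ¬ s q p := mt s.symm
  simp only [Pi.add_apply, forestRow_mergeBlocks_apply, mergeBlocks_sup_rel, mergeBlocks_rel,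
    s.refl', hab, hac, had, hbc, hbd, hcd, symm hab, symm hac, symm had, symm hbc, symm hbd,
    symm hcd, or_false, and_false, false_and, not_false_eq_true]
  generalize s ⊔ r = t
  have trefl (p : α) : t p p := t.refl p
  have tsymm {p q : α} : t p q → t q p := t.symm
  have ttrans {p q r : α} : t p q → t q r → t p r := t.trans
  grind only

end ForestRow

section Isolate

variable {α : Type*} (s : Setoid α) (a b c d x y u v : α)

/-- The partition obtained from `s` by removing `x` from its block and making `{x}` a block. -/
def isolate : Setoid α where
  r u v := u = v ∨ (u ≠ x ∧ v ≠ x ∧ s u v)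
  iseqv := by
    have symm {p q : α} : s p q → s q p := s.symm
    have trans {p q r : α} : s p q → s q r → s p r := s.trans
    exact ⟨fun p => .inl rfl, by grind, by grind⟩

theorem isolate_rel : isolate s x u v ↔ u = v ∨ (u ≠ x ∧ v ≠ x ∧ s u v) :=
  Iff.rfl

theorem isolate_le : isolate s x ≤ s := by
  rintro u v (rfl | ⟨-, -, huv⟩)
  exacts [s.refl u, huv]

variable {v x} in
theorem not_isolate_rel_of_ne (hv : v ≠ x) : ¬ isolate s x x v := by
  rintro (rfl | ⟨hx, -⟩)
  exacts [hv rfl, hx rfl]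

theorem isolate_comm : isolate (isolate s x) y = isolate (isolate s y) x := by
  ext u v
  simp only [isolate_rel]
  tauto

variable {s a b c d x y}

theorem isolate_mergeBlocks (hx : x ≠ a) (hy : y ≠ a) :
    isolate (mergeBlocks s x y) a = mergeBlocks (isolate s a) x y := by
  ext u v
  have refl (p : α) : s p p := s.refl p
  have symm {p q : α} : s p q → s q p := s.symm
  simp only [mergeBlocks_rel, isolate_rel]
  grind

theorem mergeBlocks_isolate_of_rel (hca : c ≠ a) (hac : s a c) :
    mergeBlocks (isolate s a) a c = s := by
  ext u v
  have refl (p : α) : s p p := s.refl p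
  have symm {p q : α} : s p q → s q p := s.symm
  have trans {p q r : α} : s p q → s q r → s p r := s.trans
  simp only [mergeBlocks_rel, isolate_rel]
  grind

variable [DecidableEq α]

theorem comap_swap_of_rel (hab : s a b) : s.comap (Equiv.swap a b) = s := by
  ext u v
  have symm {p q : α} : s p q → s q p := s.symm
  have trans {p q r : α} : s p q → s q r → s p r := s.trans
  simp only [Setoid.comap_rel, Equiv.swap_apply_def]
  grind

theorem comap_swap_of_singleton (ha : ∀ c, s a c → c = a) :
    s.comap (Equiv.swap a b) = isolate (mergeBlocks s a b) b := by
  ext u v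
  have refl (p : α) : s p p := s.refl p
  have symm {p q : α} : s p q → s q p := s.symm
  simp only [Setoid.comap_rel, Equiv.swap_apply_def, isolate_rel, mergeBlocks_rel]
  grind

theorem comap_swap_isolate_isolate :
    (isolate (isolate s a) b).comap (Equiv.swap a b) = isolate (isolate s a) b := by
  ext u v
  simp only [Setoid.comap_rel, Equiv.swap_apply_def, isolate_rel]
  grind

theorem comap_swap_mergeBlocks_mergeBlocks (hca : c ≠ a) (hcb : c ≠ b) (hda : d ≠ a)
    (hdb : d ≠ b) :
    (mergeBlocks (mergeBlocks (isolate (isolate s a) b) a c) b d).comap (Equiv.swap a b) =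
      mergeBlocks (mergeBlocks (isolate (isolate s a) b) b c) a d := by
  rw [comap_mergeBlocks, comap_mergeBlocks, comap_swap_isolate_isolate, Equiv.symm_swap,
    Equiv.swap_apply_left, Equiv.swap_apply_right, Equiv.swap_apply_of_ne_of_ne hca hcb,
    Equiv.swap_apply_of_ne_of_ne hda hdb]

variable [Finite α]

-- The four-block relation for the blocks of `a`, `b`, `c` and `d` after `a` and `b` have been
-- isolated: the pairings `ac|bd` and `bc|ad` give `s` and the relabelled partition.
theorem forestRow_comap_swap (hab : ¬ s a b) (hca : c ≠ a) (hac : s a c) (hdb : d ≠ b)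
    (hbd : s b d) :
    forestRow (s.comap (Equiv.swap a b)) =
      forestRow (mergeBlocks (isolate s b) a b) + forestRow (mergeBlocks (isolate s a) a b)
        + forestRow (isolate (mergeBlocks s a b) b) + forestRow (isolate (mergeBlocks s a b) a)
        - forestRow s - forestRow (mergeBlocks (isolate (isolate (mergeBlocks s a b) a) b) a b)
        - forestRow (mergeBlocks s a b) := by
  have hne : a ≠ b := by rintro rfl; exact hab (s.refl a)
  have hcb : c ≠ b := by rintro rfl; exact hab hac
  have hda : d ≠ a := by rintro rfl; exact hab (s.symm hbd)
  have hcd : ¬ s c d := fun h => hab (s.trans hac (s.trans h (s.symm hbd)))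
  set s₀ := isolate (isolate s a) b with hs₀
  have merge_cd : mergeBlocks s a b = mergeBlocks s c d := mergeBlocks_congr hac hbd
  have s₀_ac : mergeBlocks s₀ a c = isolate s b := by
    rw [hs₀, isolate_comm]
    exact mergeBlocks_isolate_of_rel hca (Or.inr ⟨hne, hcb, hac⟩)
  have s₀_bd : mergeBlocks s₀ b d = isolate s a :=
    mergeBlocks_isolate_of_rel hdb (Or.inr ⟨hne.symm, hda, hbd⟩)
  have s₀_ac_bd : mergeBlocks (mergeBlocks s₀ a c) b d = s := by
    rw [s₀_ac, mergeBlocks_isolate_of_rel hdb hbd]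
  have s₀_bc_ad : mergeBlocks (mergeBlocks s₀ b c) a d = s.comap (Equiv.swap a b) := by
    rw [← comap_swap_mergeBlocks_mergeBlocks hca hcb hda hdb, ← hs₀, s₀_ac_bd]
  have s₀_ab_cd : mergeBlocks (mergeBlocks s₀ a b) c d =
      mergeBlocks (isolate (isolate (mergeBlocks s a b) a) b) a b := by
    rw [mergeBlocks_right_comm, merge_cd, isolate_mergeBlocks hca hda, isolate_mergeBlocks hcb hdb]
  have s₀_ac_cd : mergeBlocks (mergeBlocks s₀ a c) c d = isolate (mergeBlocks s a b) b := by
    rw [s₀_ac, merge_cd, isolate_mergeBlocks hcb hdb]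
  have s₀_bd_cd : mergeBlocks (mergeBlocks s₀ b d) c d = isolate (mergeBlocks s a b) a := by
    rw [s₀_bd, merge_cd, isolate_mergeBlocks hca hda]
  have isolated_a {p : α} (hp : p ≠ a) : ¬ s₀ a p :=
    fun h => not_isolate_rel_of_ne s hp (isolate_le (isolate s a) b h)
  have isolated_b {p : α} (hp : p ≠ b) : ¬ s₀ b p := not_isolate_rel_of_ne (isolate s a) hp
  have hcd₀ : ¬ s₀ c d := fun h => hcd (isolate_le s a (isolate_le (isolate s a) b h))
  have relation := forestRow_pairings_add_whole_eq_triples (isolated_a hne.symm) (isolated_a hca)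
    (isolated_a hda) (isolated_b hcb) (isolated_b hdb) hcd₀
  rw [s₀_bc_ad, s₀_ab_cd, s₀_ac_cd, s₀_bd_cd, s₀_ac_bd, s₀_ac, s₀_bd] at relation
  linear_combination relation

end Isolate

section Noncrossing

variable {α β : Type*} [LinearOrder α] [LinearOrder β] {s t : Setoid α} {a b m x y u v : α}

/-- A partition of a linear order is noncrossing if it has no `x < y < z < w` with `x, z` in one
block and `y, w` in a different one. -/
def IsNoncrossing (s : Setoid α) : Prop :=
  ∀ ⦃x y z w : α⦄, x < y → y < z → z < w → s x z → s y w → s x y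

namespace IsNoncrossing

theorem comap (hs : IsNoncrossing s) {f : β → α} (hf : StrictMono f) :
    IsNoncrossing (s.comap f) :=
  fun _ _ _ _ hxy hyz hzw => hs (hf hxy) (hf hyz) (hf hzw)

theorem ker {f : α → β} (hf : Monotone f) : IsNoncrossing (Setoid.ker f) :=
  fun _ _ _ _ hxy hyz _ hxz _ => le_antisymm (hf hxy.le) ((hf hyz.le).trans_eq (Eq.symm hxz))

theorem isolate (hs : IsNoncrossing s) (a : α) : IsNoncrossing (isolate s a) := by
  rintro x y z w hxy hyz hzw (rfl | ⟨hx, -, hxz⟩) (rfl | ⟨hy, -, hyw⟩)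
  · exact absurd hyz hxy.asymm
  · exact absurd hyz hxy.asymm
  · exact absurd hzw hyz.asymm
  · exact .inr ⟨hx, hy, hs hxy hyz hzw hxz hyw⟩

theorem rel_of_separated (hs : IsNoncrossing s) (huv : s u v) (hxy : s x y) (hux : u < x)
    (hxv : x < v) (hy : y < u ∨ v < y) : s u x := by
  rcases hy with hyu | hvy
  · exact s.trans (s.symm (hs hyu hux hxv (s.symm hxy) huv)) (s.symm hxy)
  · exact hs hux hxv hvy huv hxy

-- As `a` and `b` are adjacent, they lie on the same side of the chord `uv`, whereas `x` and `y`
-- lie on different sides; hence the chord separates two points of the block of `a` or of `b`.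
theorem rel_or_rel_of_separated (hs : IsNoncrossing s) (hab : a ⋖ b) (huv : s u v)
    (hx : s x a ∨ s x b) (hy : s y a ∨ s y b) (hux : u < x) (hxv : x < v) (hyu : y < u ∨ v < y) :
    s u a ∨ s u b := by
  have symm {p q : α} : s p q → s q p := s.symm
  have trans {p q r : α} : s p q → s q r → s p r := s.trans
  by_cases hends : u = a ∨ u = b ∨ v = a ∨ v = b
  · rcases hends with rfl | rfl | rfl | rfl
    exacts [.inl (s.refl u), .inr (s.refl u), .inl huv, .inr huv]
  have side : (u < a ∧ a < v ∧ u < b ∧ b < v) ∨ ((a < u ∨ v < a) ∧ (b < u ∨ v < b)) := by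
    have hlt := hab.lt
    have hu : u ≤ a ∨ b ≤ u := (le_or_gt u a).imp_right hab.ge_of_gt
    have hv : v ≤ a ∨ b ≤ v := (le_or_gt v a).imp_right hab.ge_of_gt
    grind
  rcases side with ⟨hua, hav, hub, hbv⟩ | ⟨ha, hb⟩
  · exact hy.imp (fun h => hs.rel_of_separated huv (symm h) hua hav hyu)
      (fun h => hs.rel_of_separated huv (symm h) hub hbv hyu)
  · exact hx.imp (fun h => trans (hs.rel_of_separated huv h hux hxv ha) h)
      (fun h => trans (hs.rel_of_separated huv h hux hxv hb) h)

theorem mergeBlocks (hs : IsNoncrossing s) (hab : a ⋖ b) : IsNoncrossing (mergeBlocks s a b) := by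
  have symm {p q : α} : s p q → s q p := s.symm
  have trans {p q r : α} : s p q → s q r → s p r := s.trans
  have rel_iff (p q : α) : _root_.mergeBlocks s a b p q ↔
      s p q ∨ (s p a ∨ s p b) ∧ (s q a ∨ s q b) := by
    rw [mergeBlocks_rel]
    grind
  intro x y z w hxy hyz hzw
  simp only [rel_iff]
  rintro (hxz | ⟨hx, hz⟩) (hyw | ⟨hy, hw⟩)
  · exact .inl (hs hxy hyz hzw hxz hyw)
  · exact .inr ⟨hs.rel_or_rel_of_separated hab hxz hy hw hxy hyz (.inr hzw), hy⟩
  · exact .inr ⟨hx, hs.rel_or_rel_of_separated hab hyw hz hx hyz hzw (.inl hxy)⟩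
  · exact .inr ⟨hx, hy⟩

theorem rel_bot_of_rel_of_lt [OrderBot α] (hs : IsNoncrossing s) (hm : s ⊥ m) (hxm : x ≤ m)
    (hmy : m < y) (hxy : s x y) : s ⊥ x := by
  rcases eq_bot_or_bot_lt x with rfl | hx
  · exact s.refl ⊥
  rcases hxm.eq_or_lt with rfl | hxm
  · exact hm
  · exact hs hx hxm hmy hm hxy

theorem le_of_isGreatest [OrderBot α] (hs : IsNoncrossing s) (hsm : IsGreatest {k | s ⊥ k} m)
    (htm : t ⊥ m) (hlt : ∀ x < m, ∀ y < m, s x y → t x y)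
    (hgt : ∀ x, m < x → ∀ y, m < y → s x y → t x y) : s ≤ t := by
  suffices ∀ x y, x < y → s x y → t x y by
    intro x y hxy
    rcases lt_trichotomy x y with h | rfl | h
    exacts [this x y h hxy, t.refl x, t.symm (this y x h (s.symm hxy))]
  intro x y hlt_xy hxy
  rcases lt_trichotomy y m with hy | rfl | hy
  · exact hlt x (hlt_xy.trans hy) y hy hxy
  · have hbot : t ⊥ x := hlt ⊥ (bot_le.trans_lt hlt_xy) x hlt_xy (s.trans hsm.1 (s.symm hxy))
    exact t.trans (t.symm hbot) htm
  · rcases lt_or_ge m x with hx | hx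
    · exact hgt x hx y hy hxy
    · have hbot : s ⊥ x := hs.rel_bot_of_rel_of_lt hsm.1 hx hy hxy
      exact absurd (hsm.2 (s.trans hbot hxy)) hy.not_ge

theorem eq_of_isGreatest_of_comap_eq [OrderBot α] (hs : IsNoncrossing s) (ht : IsNoncrossing t)
    (hsm : IsGreatest {k | s ⊥ k} m) (htm : IsGreatest {k | t ⊥ k} m)
    (hlt : s.comap ((↑) : Set.Iio m → α) = t.comap (↑))
    (hgt : s.comap ((↑) : Set.Ioi m → α) = t.comap (↑)) : s = t := by
  rw [Setoid.ext_iff] at hlt hgt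
  exact le_antisymm
    (hs.le_of_isGreatest hsm htm.1 (fun x hx y hy => (hlt ⟨x, hx⟩ ⟨y, hy⟩).1)
      (fun x hx y hy => (hgt ⟨x, hx⟩ ⟨y, hy⟩).1))
    (ht.le_of_isGreatest htm hsm.1 (fun x hx y hy => (hlt ⟨x, hx⟩ ⟨y, hy⟩).2)
      (fun x hx y hy => (hgt ⟨x, hx⟩ ⟨y, hy⟩).2))

end IsNoncrossing

variable (α)

theorem card_isNoncrossing_le_sum [Fintype α] [OrderBot α] :
    Nat.card {s : Setoid α // IsNoncrossing s} ≤
      ∑ m : α, Nat.card {s : Setoid (Set.Iio m) // IsNoncrossing s} *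
        Nat.card {s : Setoid (Set.Ioi m) // IsNoncrossing s} := by
  let Fiber (m : α) := {s : Setoid α // IsNoncrossing s ∧ IsGreatest {k | s ⊥ k} m}
  let forget : (Σ m, Fiber m) → {s : Setoid α // IsNoncrossing s} := fun p => ⟨p.2.1, p.2.2.1⟩
  have forget_surjective : Function.Surjective forget := fun ⟨s, hs⟩ => by
    obtain ⟨m, hm⟩ := (Set.toFinite {k | s ⊥ k}).exists_maximal ⟨⊥, s.refl ⊥⟩
    exact ⟨⟨m, s, hs, hm.1, fun k hk => le_of_not_gt fun h => h.not_ge (hm.2 hk h.le)⟩, rfl⟩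
  let restrict (m : α) (p : Fiber m) : {s : Setoid (Set.Iio m) // IsNoncrossing s} ×
      {s : Setoid (Set.Ioi m) // IsNoncrossing s} :=
    (⟨_, p.2.1.comap (Subtype.strictMono_coe _)⟩, ⟨_, p.2.1.comap (Subtype.strictMono_coe _)⟩)
  have restrict_injective (m : α) : Function.Injective (restrict m) := fun ⟨s, hs⟩ ⟨t, ht⟩ h =>
    Subtype.ext (hs.1.eq_of_isGreatest_of_comap_eq ht.1 hs.2 ht.2
      (congrArg (·.1.1) h) (congrArg (·.2.1) h))
  calc Nat.card {s : Setoid α // IsNoncrossing s}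
      ≤ Nat.card (Σ m, Fiber m) := Nat.card_le_card_of_surjective forget forget_surjective
    _ = ∑ m, Nat.card (Fiber m) := Nat.card_sigma
    _ ≤ _ := Finset.sum_le_sum fun m _ =>
        (Nat.card_le_card_of_injective (restrict m) (restrict_injective m)).trans_eq
          (Nat.card_prod _ _)

theorem sum_catalan_card_Iio_mul_catalan_card_Ioi [Fintype α] [Nonempty α] :
    ∑ m : α, catalan (Nat.card (Set.Iio m)) * catalan (Nat.card (Set.Ioi m)) =
      catalan (Nat.card α) := by
  obtain ⟨n, hn⟩ := Nat.exists_eq_succ_of_ne_zero (Fintype.card_ne_zero (α := α))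
  let e : Fin (n + 1) ≃o α := Fintype.orderIsoFinOfCardEq α hn
  rw [Nat.card_eq_fintype_card, hn, catalan_succ]
  refine (Fintype.sum_equiv e.toEquiv _ _ fun i => ?_).symm
  have hIio : Nat.card (Set.Iio (e i)) = i := by
    rw [← e.image_Iio, Nat.card_image_of_injective e.injective]
    simp
  have hIoi : Nat.card (Set.Ioi (e i)) = n - i := by
    rw [← e.image_Ioi, Nat.card_image_of_injective e.injective]
    simp
  exact congrArg₂ (catalan · * catalan ·) hIio.symm hIoi.symm

theorem card_isNoncrossing_le_catalan [Finite α] :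
    Nat.card {s : Setoid α // IsNoncrossing s} ≤ catalan (Nat.card α) := by
  induction hn : Nat.card α using Nat.strong_induction_on generalizing α with | _ n ih =>
  subst hn
  cases nonempty_fintype α
  rcases isEmpty_or_nonempty α with hα | hα
  · have : Subsingleton (Setoid α) := ⟨fun s t => Setoid.ext fun x => hα.elim x⟩
    simpa using Finite.card_le_one_iff_subsingleton.2
      (inferInstance : Subsingleton {s : Setoid α // IsNoncrossing s})
  let _ : OrderBot α := Fintype.toOrderBot α
  have card_lt {S : Set α} {m : α} (hm : m ∉ S) : Nat.card S < Nat.card α := by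
    rw [Nat.card_coe_set_eq, ← Set.ncard_univ]
    exact Set.ncard_lt_ncard (Set.ssubset_univ_iff.2 ((Set.ne_univ_iff_exists_notMem S).2 ⟨m, hm⟩))
  calc _ ≤ ∑ m : α, Nat.card {s : Setoid (Set.Iio m) // IsNoncrossing s} *
          Nat.card {s : Setoid (Set.Ioi m) // IsNoncrossing s} := card_isNoncrossing_le_sum α
    _ ≤ ∑ m : α, catalan (Nat.card (Set.Iio m)) * catalan (Nat.card (Set.Ioi m)) :=
        Finset.sum_le_sum fun m _ => Nat.mul_le_mul
          (ih _ (card_lt Set.self_notMem_Iio) _ rfl) (ih _ (card_lt Set.self_notMem_Ioi) _ rfl)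
    _ = catalan (Nat.card α) := sum_catalan_card_Iio_mul_catalan_card_Ioi α

end Noncrossing

section Relabel

variable {α β : Type*}

/-- Pulling partitions back along a bijection, as an isomorphism of partition lattices. -/
def comapOrderIso (e : α ≃ β) : Setoid β ≃o Setoid α :=
  Equiv.toOrderIso
    { toFun := fun s => s.comap e
      invFun := fun s => s.comap e.symm
      left_inv := fun s => by ext; simp only [Setoid.comap_rel, Equiv.apply_symm_apply]
      right_inv := fun s => by ext; simp only [Setoid.comap_rel, Equiv.symm_apply_apply] }
    (fun _ _ h _ _ hxy => h hxy) (fun _ _ h _ _ hxy => h hxy)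

theorem compatible_comapOrderIso_iff (e : α ≃ β) (s t : Setoid β) :
    Compatible (comapOrderIso e s) (comapOrderIso e t) ↔ Compatible s t := by
  have nBlocks_eq (r : Setoid β) : nBlocks (comapOrderIso e r) = nBlocks r := nBlocks_comap e r
  rw [Compatible, Compatible, ← map_sup, nBlocks_eq, nBlocks_eq, nBlocks_eq, Nat.card_congr e]

/-- The linear action of a permutation of `α` on vectors indexed by the partitions of `α`. -/
def relabel (σ : Equiv.Perm α) : (Setoid α → ℚ) →ₗ[ℚ] (Setoid α → ℚ) :=
  LinearMap.funLeft ℚ ℚ (comapOrderIso σ).symm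

theorem relabel_forestRow (σ : Equiv.Perm α) (s : Setoid α) :
    relabel σ (forestRow s) = forestRow (s.comap σ) := by
  classical
  funext r
  obtain ⟨r, rfl⟩ := (comapOrderIso σ).surjective r
  have hσ : s.comap σ = comapOrderIso σ s := rfl
  rw [relabel, LinearMap.funLeft_apply, OrderIso.symm_apply_apply, hσ, forestRow_apply,
    forestRow_apply, compatible_comapOrderIso_iff]

end Relabel

section NoncrossingSpan

variable {α : Type*} [LinearOrder α]

variable (α) in
/-- The span of the rows of the forest matrix at the noncrossing partitions. -/
def noncrossingSpan : Submodule ℚ (Setoid α → ℚ) :=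
  Submodule.span ℚ (Set.range fun s : {s : Setoid α // IsNoncrossing s} => forestRow s.1)

variable {s : Setoid α} {a b : α}

theorem IsNoncrossing.forestRow_mem (hs : IsNoncrossing s) : forestRow s ∈ noncrossingSpan α :=
  Submodule.subset_span ⟨⟨s, hs⟩, rfl⟩

theorem IsNoncrossing.forestRow_comap_swap_mem [Finite α] (hs : IsNoncrossing s) (hab : a ⋖ b) :
    forestRow (s.comap (Equiv.swap a b)) ∈ noncrossingSpan α := by
  by_cases hsab : s a b
  · rw [comap_swap_of_rel hsab]
    exact hs.forestRow_mem
  by_cases ha : ∀ c, s a c → c = a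
  · rw [comap_swap_of_singleton ha]
    exact ((hs.mergeBlocks hab).isolate b).forestRow_mem
  by_cases hb : ∀ d, s b d → d = b
  · rw [Equiv.swap_comm, comap_swap_of_singleton hb, mergeBlocks_comm]
    exact ((hs.mergeBlocks hab).isolate a).forestRow_mem
  push Not at ha hb
  obtain ⟨c, hac, hca⟩ := ha
  obtain ⟨d, hbd, hdb⟩ := hb
  have hmerge := hs.mergeBlocks hab
  rw [forestRow_comap_swap hsab hca hac hdb hbd]
  have left := ((hs.isolate b).mergeBlocks hab).forestRow_mem
  have right := ((hs.isolate a).mergeBlocks hab).forestRow_mem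
  have pair := (((hmerge.isolate a).isolate b).mergeBlocks hab).forestRow_mem
  exact sub_mem (sub_mem (sub_mem (add_mem (add_mem (add_mem left right)
    (hmerge.isolate b).forestRow_mem) (hmerge.isolate a).forestRow_mem) hs.forestRow_mem) pair)
    hmerge.forestRow_mem

theorem relabel_swap_mem_noncrossingSpan [Finite α] (hab : a ⋖ b) {v : Setoid α → ℚ}
    (hv : v ∈ noncrossingSpan α) : relabel (Equiv.swap a b) v ∈ noncrossingSpan α := by
  suffices noncrossingSpan α ≤ (noncrossingSpan α).comap (relabel (Equiv.swap a b)) from this hv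
  refine Submodule.span_le.2 ?_
  rintro _ ⟨⟨s, hs⟩, rfl⟩
  rw [SetLike.mem_coe, Submodule.mem_comap, relabel_forestRow]
  exact hs.forestRow_comap_swap_mem hab

theorem relabel_mem_noncrossingSpan {n : ℕ} (σ : Equiv.Perm (Fin n)) {v : Setoid (Fin n) → ℚ}
    (hv : v ∈ noncrossingSpan (Fin n)) : relabel σ v ∈ noncrossingSpan (Fin n) := by
  obtain _ | n := n
  · obtain rfl := Subsingleton.elim σ 1
    exact hv
  have hσ : σ ∈ Submonoid.closure (Set.range fun i : Fin n => Equiv.swap i.castSucc i.succ) :=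
    Equiv.Perm.mclosure_swap_castSucc_succ n ▸ Submonoid.mem_top σ
  induction hσ using Submonoid.closure_induction generalizing v with
  | mem _ h =>
    obtain ⟨i, rfl⟩ := h
    exact relabel_swap_mem_noncrossingSpan (by simp) hv
  | one => exact hv
  | mul _ _ _ _ ihσ ihτ => exact ihτ (ihσ hv)

theorem exists_perm_isNoncrossing_comap {n : ℕ} (s : Setoid (Fin n)) :
    ∃ σ : Equiv.Perm (Fin n), IsNoncrossing (s.comap σ) := by
  let blockIndex : Fin n → Fin (Nat.card (Quotient s)) := Finite.equivFin _ ∘ Quotient.mk s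
  have hs : s = Setoid.ker blockIndex := by
    ext x y
    simp [blockIndex, Setoid.ker_def, Quotient.eq]
  have hsort : s.comap (Tuple.sort blockIndex) = Setoid.ker (blockIndex ∘ Tuple.sort blockIndex) :=
    congrArg (Setoid.comap _) hs
  exact ⟨Tuple.sort blockIndex, hsort ▸ .ker (Tuple.monotone_sort blockIndex)⟩

theorem forestRow_mem_noncrossingSpan {n : ℕ} (s : Setoid (Fin n)) :
    forestRow s ∈ noncrossingSpan (Fin n) := by
  obtain ⟨σ, hσ⟩ := exists_perm_isNoncrossing_comap s
  have hs : s = (s.comap σ).comap σ.symm := ((comapOrderIso σ).symm_apply_apply s).symm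
  rw [hs, ← relabel_forestRow]
  exact relabel_mem_noncrossingSpan σ.symm hσ.forestRow_mem

end NoncrossingSpan

/-- For every positive integer `n`, the rank over `ℚ` of the forest compatibility
matrix `F_n` is at most the `n`-th Catalan number. -/
theorem rank_forestMatrix_le_catalan (n : ℕ) (hn : 0 < n) :
    (FMat (Fin n)).rank ≤ catalan n := by
  have row_span_le : Submodule.span ℚ (Set.range (FMat (Fin n)).row) ≤ noncrossingSpan (Fin n) := by
    refine Submodule.span_le.2 ?_
    rintro _ ⟨s, rfl⟩
    exact forestRow_mem_noncrossingSpan s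
  cases nonempty_fintype {s : Setoid (Fin n) // IsNoncrossing s}
  calc (FMat (Fin n)).rank
      = Module.finrank ℚ (Submodule.span ℚ (Set.range (FMat (Fin n)).row)) :=
        Matrix.rank_eq_finrank_span_row _
    _ ≤ Module.finrank ℚ (noncrossingSpan (Fin n)) := Submodule.finrank_mono row_span_le
    _ ≤ Fintype.card {s : Setoid (Fin n) // IsNoncrossing s} := finrank_range_le_card _
    _ = Nat.card {s : Setoid (Fin n) // IsNoncrossing s} := Nat.card_eq_fintype_card.symm
    _ ≤ catalan (Nat.card (Fin n)) := card_isNoncrossing_le_catalan (Fin n)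
    _ = catalan n := by rw [Nat.card_fin]
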